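/- Let λ > 0 and let u : [0,T] × ℝ² → ℝ² be a smooth solution of the 2D Burgers–Sivashinsky equation ∂ₜu + (u·∇)u = Δu + λu that is 2π-periodic in each spatial coordinate and curl-free (∂₁u² = ∂₂u¹) for every t ∈ [0,T]. Let δ = ∇·u and δ*(t) = sup_{x ∈ Ω} δ(t,x). Then for every t ∈ [0,T], δ*(t) ≤ e^{λt} δ*(0); in particular, sup_{x ∈ Ω} max(δ(t,x),0) ≤ e^{λt} max(δ*(0), 0). -/

import Mathlib

/-!
The divergence `δ` of a curl-free solution satisfies
`∂ₜδ + u·∇δ = −|∇u|² + Δδ + λδ` (`div_equation`), obtained by differentiating the equation for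
each component in space and adding, so it is a subsolution of the linear equation without the
term `−|∇u|²`. Hence `e^{-λt} δ − εt` has no maximum at a positive time: there the spatial
gradient vanishes, the Laplacian is nonpositive (`max_conditions`; the maximum is over the whole
plane, by periodicity) and the one-sided time derivative is nonnegative (`time_deriv_nonneg`),
against `∂ₜ(e^{-λt} δ − εt) ≤ −ε`. So its maximum over `[0,t] × Ω` is at time `0`, and `ε → 0`
gives `δ(t,x) ≤ e^{λt} δ*(0)` (`max_principle`). The statement about positive parts follows
pointwise.
-/

open Real MeasureTheory Set intervalIntegral
open scoped Real Classical

noncomputable section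

/-- Partial derivative in the first spatial coordinate. -/
def pd1 (f : ℝ × ℝ → ℝ) (x : ℝ × ℝ) : ℝ := deriv (fun s => f (s, x.2)) x.1

/-- Partial derivative in the second spatial coordinate. -/
def pd2 (f : ℝ × ℝ → ℝ) (x : ℝ × ℝ) : ℝ := deriv (fun s => f (x.1, s)) x.2

/-- Advective derivative `(v·∇)f = v¹ ∂₁f + v² ∂₂f`. -/
def adv (v : ℝ × ℝ → ℝ × ℝ) (f : ℝ × ℝ → ℝ) (x : ℝ × ℝ) : ℝ :=
  (v x).1 * pd1 f x + (v x).2 * pd2 f x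

/-- Divergence `∇·v = ∂₁v¹ + ∂₂v²`. -/
def divg (v : ℝ × ℝ → ℝ × ℝ) (x : ℝ × ℝ) : ℝ :=
  pd1 (fun y => (v y).1) x + pd2 (fun y => (v y).2) x

/-- Scalar curl `∇⊥·v = ∂₁v² − ∂₂v¹`. -/
def curl2 (v : ℝ × ℝ → ℝ × ℝ) (x : ℝ × ℝ) : ℝ :=
  pd1 (fun y => (v y).2) x - pd2 (fun y => (v y).1) x

/-- Laplacian `Δf = ∂₁²f + ∂₂²f`. -/
def lap (f : ℝ × ℝ → ℝ) : ℝ × ℝ → ℝ := fun x => pd1 (pd1 f) x + pd2 (pd2 f) x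

/-- `|∇v|² = Σ_{i,j} (∂ᵢvʲ)²`. -/
def gradNormSq (v : ℝ × ℝ → ℝ × ℝ) (x : ℝ × ℝ) : ℝ :=
  (pd1 (fun y => (v y).1) x)^2 + (pd2 (fun y => (v y).1) x)^2 +
  (pd1 (fun y => (v y).2) x)^2 + (pd2 (fun y => (v y).2) x)^2

/-- The periodic box `Ω = [0,2π]²`. -/
def Omega2 : Set (ℝ × ℝ) := Set.Icc (0:ℝ) (2*π) ×ˢ Set.Icc (0:ℝ) (2*π)

/-- `2π`-periodicity in each coordinate for a vector field. -/
def Periodic2 (f : ℝ × ℝ → ℝ × ℝ) : Prop :=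
  ∀ x : ℝ × ℝ, f (x.1 + 2*π, x.2) = f x ∧ f (x.1, x.2 + 2*π) = f x

/-- Squared `L²(Ω)` norm of a vector field. -/
def l2sq (v : ℝ × ℝ → ℝ × ℝ) : ℝ := ∫ x in Omega2, ((v x).1^2 + (v x).2^2)

/-- Squared `L²(Ω)` norm of `Δv`. -/
def l2sqLap (v : ℝ × ℝ → ℝ × ℝ) : ℝ :=
  ∫ x in Omega2, ((lap (fun y => (v y).1) x)^2 + (lap (fun y => (v y).2) x)^2)

/-- `ℓ`-th Fourier coefficient of a scalar field. -/
def fc (f : ℝ × ℝ → ℝ) (ℓ : ℤ × ℤ) : ℂ :=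
  ((2*π)^2)⁻¹ • ∫ x in Omega2,
    (f x : ℂ) * Complex.exp (-(Complex.I) * ((ℓ.1:ℂ) * (x.1:ℂ) + (ℓ.2:ℂ) * (x.2:ℂ)))

/-- `ℓ`-th Fourier coefficient of a vector field. -/
def fcVec (v : ℝ × ℝ → ℝ × ℝ) (ℓ : ℤ × ℤ) : ℂ × ℂ :=
  (fc (fun y => (v y).1) ℓ, fc (fun y => (v y).2) ℓ)

/-- `|v̂_ℓ|²`. -/
def coefAbsSq (v : ℝ × ℝ → ℝ × ℝ) (ℓ : ℤ × ℤ) : ℝ :=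
  ‖fc (fun y => (v y).1) ℓ‖^2 + ‖fc (fun y => (v y).2) ℓ‖^2

/-- Squared homogeneous Sobolev norm `‖v‖²_{Ḣ^κ} = (2π)² Σ_{ℓ≠0} |ℓ|^{2κ}|v̂_ℓ|²`. -/
def hnormSq (v : ℝ × ℝ → ℝ × ℝ) (κ : ℝ) : ℝ :=
  (2*π)^2 * ∑' ℓ : ℤ × ℤ,
    if ℓ = 0 then 0 else ((ℓ.1:ℝ)^2 + (ℓ.2:ℝ)^2) ^ κ * coefAbsSq v ℓ

/-- Homogeneous Sobolev norm `‖v‖_{Ḣ^κ}`. -/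
def hnorm (v : ℝ × ℝ → ℝ × ℝ) (κ : ℝ) : ℝ := Real.sqrt (hnormSq v κ)

/-- Projection onto Fourier modes with `|ℓ| ≤ N` (scalar fields). -/
def PN (N : ℝ) (f : ℝ × ℝ → ℝ) (x : ℝ × ℝ) : ℝ :=
  ∑' ℓ : ℤ × ℤ,
    if ((ℓ.1:ℝ)^2 + (ℓ.2:ℝ)^2) ≤ N^2 then
      (fc f ℓ * Complex.exp (Complex.I * ((ℓ.1:ℂ) * (x.1:ℂ) + (ℓ.2:ℂ) * (x.2:ℂ)))).re
    else 0

/-- Projection onto Fourier modes with `|ℓ| ≤ N` (vector fields). -/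
def PNvec (N : ℝ) (v : ℝ × ℝ → ℝ × ℝ) (x : ℝ × ℝ) : ℝ × ℝ :=
  (PN N (fun y => (v y).1) x, PN N (fun y => (v y).2) x)

/-- High-mode part `(I − P_N)v`. -/
def highN (N : ℝ) (v : ℝ × ℝ → ℝ × ℝ) (x : ℝ × ℝ) : ℝ × ℝ := v x - PNvec N v x

/-- `(v·∇)w` as a vector field. -/
def advVec (v w : ℝ × ℝ → ℝ × ℝ) (x : ℝ × ℝ) : ℝ × ℝ :=
  (adv v (fun y => (w y).1) x, adv v (fun y => (w y).2) x)

/-- Laplacian of a vector field. -/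
def lapVec (v : ℝ × ℝ → ℝ × ℝ) (x : ℝ × ℝ) : ℝ × ℝ :=
  (lap (fun y => (v y).1) x, lap (fun y => (v y).2) x)

/-- Spatial mean `(2π)⁻² ∫_Ω v`. -/
def meanOf (v : ℝ × ℝ → ℝ × ℝ) : ℝ × ℝ := ((2*π)^2)⁻¹ • ∫ x in Omega2, v x

/-- Joint smoothness in `(t,x)`. -/
def SmoothTS (u : ℝ → ℝ × ℝ → ℝ × ℝ) : Prop :=
  ∀ n : ℕ, ContDiff ℝ n (fun p : ℝ × (ℝ × ℝ) => u p.1 p.2)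

/-- The 2D inviscid Burgers equation `∂ₜu + (u·∇)u = 0` on `[0,T] × ℝ²`. -/
def IsBurgers (T : ℝ) (u : ℝ → ℝ × ℝ → ℝ × ℝ) : Prop :=
  ∀ t ∈ Set.Icc (0:ℝ) T, ∀ x : ℝ × ℝ,
    deriv (fun s => (u s x).1) t + adv (u t) (fun y => (u t y).1) x = 0 ∧
    deriv (fun s => (u s x).2) t + adv (u t) (fun y => (u t y).2) x = 0

/-- The 2D Kuramoto–Sivashinsky equation `∂ₜu + (u·∇)u = −Δ²u − λΔu` on `[0,T] × ℝ²`. -/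
def IsKSE (lam T : ℝ) (u : ℝ → ℝ × ℝ → ℝ × ℝ) : Prop :=
  ∀ t ∈ Set.Icc (0:ℝ) T, ∀ x : ℝ × ℝ,
    deriv (fun s => (u s x).1) t + adv (u t) (fun y => (u t y).1) x
      = -(lap (lap (fun y => (u t y).1)) x) - lam * lap (fun y => (u t y).1) x ∧
    deriv (fun s => (u s x).2) t + adv (u t) (fun y => (u t y).2) x
      = -(lap (lap (fun y => (u t y).2)) x) - lam * lap (fun y => (u t y).2) x

/-- The 2D Burgers–Sivashinsky equation `∂ₜu + (u·∇)u = Δu + λu` on `[0,T] × ℝ²`. -/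
def IsBSE (lam T : ℝ) (u : ℝ → ℝ × ℝ → ℝ × ℝ) : Prop :=
  ∀ t ∈ Set.Icc (0:ℝ) T, ∀ x : ℝ × ℝ,
    deriv (fun s => (u s x).1) t + adv (u t) (fun y => (u t y).1) x
      = lap (fun y => (u t y).1) x + lam * (u t x).1 ∧
    deriv (fun s => (u s x).2) t + adv (u t) (fun y => (u t y).2) x
      = lap (fun y => (u t y).2) x + lam * (u t x).2

open scoped ContDiff

/-- Directional derivative of a space-time function `F(t,x)` in the direction `v`. Working with
total derivatives of joint functions makes the partial derivatives commute at once. -/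
def dirD (v : ℝ × (ℝ × ℝ)) (F : ℝ × (ℝ × ℝ) → ℝ) (p : ℝ × (ℝ × ℝ)) : ℝ := fderiv ℝ F p v

/-- The time direction. -/
def eT : ℝ × (ℝ × ℝ) := (1, (0, 0))

/-- The first space direction. -/
def eX : ℝ × (ℝ × ℝ) := (0, (1, 0))

/-- The second space direction. -/
def eY : ℝ × (ℝ × ℝ) := (0, (0, 1))

/-! ### Calculus of directional derivatives -/

lemma smooth_differentiable {F : ℝ × (ℝ × ℝ) → ℝ} (hF : ContDiff ℝ ∞ F) : Differentiable ℝ F :=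
  hF.differentiable (by simp)

lemma dirD_smooth {F : ℝ × (ℝ × ℝ) → ℝ} (hF : ContDiff ℝ ∞ F) (v : ℝ × (ℝ × ℝ)) :
    ContDiff ℝ ∞ (dirD v F) :=
  (hF.fderiv_right (m := ∞) (by simp)).clm_apply contDiff_const

lemma dirD_add {F G : ℝ × (ℝ × ℝ) → ℝ} (hF : ContDiff ℝ ∞ F) (hG : ContDiff ℝ ∞ G)
    (v : ℝ × (ℝ × ℝ)) :
    dirD v (fun p => F p + G p) = fun p => dirD v F p + dirD v G p := by
  funext p
  unfold dirD
  rw [fderiv_fun_add (smooth_differentiable hF p) (smooth_differentiable hG p)]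
  rfl

lemma dirD_mul {F G : ℝ × (ℝ × ℝ) → ℝ} (hF : ContDiff ℝ ∞ F) (hG : ContDiff ℝ ∞ G)
    (v : ℝ × (ℝ × ℝ)) :
    dirD v (fun p => F p * G p) = fun p => dirD v F p * G p + F p * dirD v G p := by
  funext p
  unfold dirD
  rw [fderiv_fun_mul (smooth_differentiable hF p) (smooth_differentiable hG p)]
  simp
  ring

lemma dirD_const_mul {F : ℝ × (ℝ × ℝ) → ℝ} (hF : ContDiff ℝ ∞ F) (c : ℝ)
    (v : ℝ × (ℝ × ℝ)) :
    dirD v (fun p => c * F p) = fun p => c * dirD v F p := by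
  funext p
  unfold dirD
  rw [fderiv_const_mul (smooth_differentiable hF p)]
  rfl

lemma dirD_comm {F : ℝ × (ℝ × ℝ) → ℝ} (hF : ContDiff ℝ ∞ F) (v w : ℝ × (ℝ × ℝ)) :
    dirD v (dirD w F) = dirD w (dirD v F) := by
  funext p
  have hsymm : IsSymmSndFDerivAt ℝ F p :=
    (contDiff_infty.1 hF 2).contDiffAt.isSymmSndFDerivAt (by simp)
  have hd : DifferentiableAt ℝ (fderiv ℝ F) p :=
    (hF.fderiv_right (m := ∞) (by simp)).differentiable (by simp) p
  have key : ∀ a b : ℝ × (ℝ × ℝ), dirD a (dirD b F) p = fderiv ℝ (fderiv ℝ F) p a b := by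
    intro a b
    have : HasFDerivAt (fun q => fderiv ℝ F q b) _ p :=
      hd.hasFDerivAt.clm_apply (hasFDerivAt_const b p)
    unfold dirD
    rw [this.fderiv]
    simp
  rw [key, key, hsymm.eq]

lemma hasDerivAt_line {F : ℝ × (ℝ × ℝ) → ℝ} (hF : ContDiff ℝ ∞ F) (p v : ℝ × (ℝ × ℝ)) (r : ℝ) :
    HasDerivAt (fun s : ℝ => F (p + s • v)) (dirD v F (p + r • v)) r := by
  have h1 : HasDerivAt (fun s : ℝ => p + s • v) v r := by
    simpa using ((hasDerivAt_id r).smul_const v).const_add p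
  exact (smooth_differentiable hF (p + r • v)).hasFDerivAt.comp_hasDerivAt r h1

/-- Two functions agreeing on a time slice have the same derivative in spatial directions there.
This lets an equation valid only for `t ∈ [0,T]` be differentiated in space. -/
lemma dirD_congr_slice {F G : ℝ × (ℝ × ℝ) → ℝ} (hF : ContDiff ℝ ∞ F) (hG : ContDiff ℝ ∞ G)
    {v : ℝ × (ℝ × ℝ)} (hv : v.1 = 0) {t : ℝ} (h : ∀ x, F (t, x) = G (t, x)) (x : ℝ × ℝ) :
    dirD v F (t, x) = dirD v G (t, x) := by
  have h1 := hasDerivAt_line hF (t, x) v 0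
  have h2 := hasDerivAt_line hG (t, x) v 0
  have : (fun s : ℝ => F ((t, x) + s • v)) = fun s : ℝ => G ((t, x) + s • v) := by
    funext s
    have : ((t, x) + s • v : ℝ × (ℝ × ℝ)) = (t, x + s • v.2) := by
      ext <;> simp [hv]
    rw [this, h]
  rw [this] at h1
  simpa using h1.unique h2

lemma pd1_slice {F : ℝ × (ℝ × ℝ) → ℝ} (hF : ContDiff ℝ ∞ F) (t : ℝ) :
    pd1 (fun y => F (t, y)) = fun y => dirD eX F (t, y) := by
  funext x
  have h1 : HasDerivAt (fun s : ℝ => ((t, (s, x.2)) : ℝ × (ℝ × ℝ))) eX x.1 :=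
    (hasDerivAt_const _ t).prodMk ((hasDerivAt_id x.1).prodMk (hasDerivAt_const _ x.2))
  exact ((smooth_differentiable hF (t, x)).hasFDerivAt.comp_hasDerivAt x.1 h1).deriv

lemma pd2_slice {F : ℝ × (ℝ × ℝ) → ℝ} (hF : ContDiff ℝ ∞ F) (t : ℝ) :
    pd2 (fun y => F (t, y)) = fun y => dirD eY F (t, y) := by
  funext x
  have h1 : HasDerivAt (fun s : ℝ => ((t, (x.1, s)) : ℝ × (ℝ × ℝ))) eY x.2 :=
    (hasDerivAt_const _ t).prodMk ((hasDerivAt_const _ x.1).prodMk (hasDerivAt_id x.2))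
  exact ((smooth_differentiable hF (t, x)).hasFDerivAt.comp_hasDerivAt x.2 h1).deriv

lemma hasDerivAt_time {F : ℝ × (ℝ × ℝ) → ℝ} (hF : ContDiff ℝ ∞ F) (t : ℝ) (x : ℝ × ℝ) :
    HasDerivAt (fun s => F (s, x)) (dirD eT F (t, x)) t := by
  have h1 : HasDerivAt (fun s : ℝ => ((s, x) : ℝ × (ℝ × ℝ))) eT t :=
    (hasDerivAt_id t).prodMk (hasDerivAt_const _ x)
  exact (smooth_differentiable hF (t, x)).hasFDerivAt.comp_hasDerivAt t h1

/-! ### The divergence equation -/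

/-- The equation `∂ₜδ + u·∇δ = −|∇u|² + Δδ + λδ` satisfied by `δ = ∂₁a + ∂₂b` for a curl-free
solution `(a, b)`; the curl-free condition turns `∂ᵢuʲ ∂ⱼuⁱ` into `|∇u|²`. -/
lemma div_equation {a b : ℝ × (ℝ × ℝ) → ℝ} (ha : ContDiff ℝ ∞ a) (hb : ContDiff ℝ ∞ b)
    (lam t : ℝ)
    (h1 : ∀ x, dirD eT a (t, x) + (a (t, x) * dirD eX a (t, x) + b (t, x) * dirD eY a (t, x))
      = (dirD eX (dirD eX a) (t, x) + dirD eY (dirD eY a) (t, x)) + lam * a (t, x))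
    (h2 : ∀ x, dirD eT b (t, x) + (a (t, x) * dirD eX b (t, x) + b (t, x) * dirD eY b (t, x))
      = (dirD eX (dirD eX b) (t, x) + dirD eY (dirD eY b) (t, x)) + lam * b (t, x))
    (hcf : ∀ x, dirD eX b (t, x) = dirD eY a (t, x))
    {d : ℝ × (ℝ × ℝ) → ℝ} (hd : d = fun p => dirD eX a p + dirD eY b p) (x : ℝ × ℝ) :
    dirD eT d (t, x) + (a (t, x) * dirD eX d (t, x) + b (t, x) * dirD eY d (t, x))
      = -(dirD eX a (t, x) ^ 2 + dirD eY a (t, x) ^ 2 + dirD eX b (t, x) ^ 2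
          + dirD eY b (t, x) ^ 2)
        + (dirD eX (dirD eX d) (t, x) + dirD eY (dirD eY d) (t, x)) + lam * d (t, x) := by
  have hD : ∀ {F : ℝ × (ℝ × ℝ) → ℝ}, ContDiff ℝ ∞ F → ∀ v, ContDiff ℝ ∞ (dirD v F) :=
    fun hF v => dirD_smooth hF v
  -- the general form of the equation for a component `F`, differentiated in direction `v`
  have key : ∀ {F : ℝ × (ℝ × ℝ) → ℝ}, ContDiff ℝ ∞ F →
      (∀ x, dirD eT F (t, x) + (a (t, x) * dirD eX F (t, x) + b (t, x) * dirD eY F (t, x))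
      = (dirD eX (dirD eX F) (t, x) + dirD eY (dirD eY F) (t, x)) + lam * F (t, x)) →
      ∀ v : ℝ × (ℝ × ℝ), v.1 = 0 →
      dirD eT (dirD v F) (t, x)
        + ((dirD v a (t, x) * dirD eX F (t, x) + a (t, x) * dirD eX (dirD v F) (t, x))
          + (dirD v b (t, x) * dirD eY F (t, x) + b (t, x) * dirD eY (dirD v F) (t, x)))
      = (dirD eX (dirD eX (dirD v F)) (t, x) + dirD eY (dirD eY (dirD v F)) (t, x))
        + lam * dirD v F (t, x) := by
    intro F hF hE v hv
    have hT := hD hF eT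
    have hX := hD hF eX
    have hY := hD hF eY
    have hXX := hD hX eX
    have hYY := hD hY eY
    have := dirD_congr_slice
      (F := fun p => dirD eT F p + (a p * dirD eX F p + b p * dirD eY F p))
      (G := fun p => (dirD eX (dirD eX F) p + dirD eY (dirD eY F) p) + lam * F p)
      (hT.add ((ha.mul hX).add (hb.mul hY))) ((hXX.add hYY).add (contDiff_const.mul hF))
      hv hE x
    rw [dirD_add hT ((ha.mul hX).add (hb.mul hY)), dirD_add (ha.mul hX) (hb.mul hY),
      dirD_mul ha hX, dirD_mul hb hY, dirD_add (hXX.add hYY) (contDiff_const.mul hF),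
      dirD_add hXX hYY, dirD_const_mul hF, dirD_comm hX v eX, dirD_comm hY v eY,
      dirD_comm hF v eX, dirD_comm hF v eY, dirD_comm hF v eT] at this
    exact this
  have k1 := key ha h1 eX rfl
  have k2 := key hb h2 eY rfl
  have hxa := hD ha eX
  have hyb := hD hb eY
  have hdD : ∀ v, dirD v d = fun p => dirD v (dirD eX a) p + dirD v (dirD eY b) p := by
    intro v
    rw [hd, dirD_add hxa hyb]
  rw [hdD eT, hdD eX, hdD eY, dirD_add (hD hxa eX) (hD hyb eX),
    dirD_add (hD hxa eY) (hD hyb eY), hd]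
  rw [hcf x] at *
  linear_combination k1 + k2

/-! ### First and second order conditions at maxima -/

lemma max_conditions {F : ℝ × (ℝ × ℝ) → ℝ} (hF : ContDiff ℝ ∞ F) (p v : ℝ × (ℝ × ℝ))
    (hmax : ∀ s : ℝ, F (p + s • v) ≤ F p) :
    dirD v F p = 0 ∧ dirD v (dirD v F) p ≤ 0 := by
  set g : ℝ → ℝ := fun s => F (p + s • v) with hg
  have hg1 : deriv g = fun s => dirD v F (p + s • v) :=
    funext fun s => (hasDerivAt_line hF p v s).deriv
  have hg2 : deriv (deriv g) 0 = dirD v (dirD v F) p := by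
    rw [hg1]
    simpa using (hasDerivAt_line (dirD_smooth hF v) p v 0).deriv
  have hlm : IsLocalMax g 0 := Filter.Eventually.of_forall fun s => by simpa [hg] using hmax s
  have h0 : deriv g 0 = 0 := hlm.deriv_eq_zero
  refine ⟨by simpa [hg1] using h0, ?_⟩
  by_contra! hpos
  rw [← hg2] at hpos
  have hmin : IsLocalMin g 0 :=
    isLocalMin_of_deriv_deriv_pos hpos h0 (hasDerivAt_line hF p v 0).continuousAt
  -- a point that is both a local minimum and a local maximum has `g` locally constant
  have hconst : g =ᶠ[nhds 0] fun _ => g 0 := by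
    filter_upwards [hlm, hmin] with s h h' using le_antisymm h h'
  have := hconst.deriv.deriv_eq
  simp at this
  linarith

lemma time_deriv_nonneg {f : ℝ → ℝ} {f' s : ℝ} (hs : 0 < s) (hf : HasDerivAt f f' s)
    (hmax : ∀ r ∈ Set.Icc 0 s, f r ≤ f s) : 0 ≤ f' := by
  have hm : IsLocalMaxOn f (Set.Icc 0 s) s :=
    IsMaxOn.localize (fun r hr => hmax r hr)
  have h := hm.hasFDerivWithinAt_nonpos hf.hasFDerivAt.hasFDerivWithinAt
    (y := (0:ℝ) - s) (sub_mem_posTangentConeAt_of_segment_subset (by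
      rw [segment_symm, segment_eq_Icc hs.le]))
  simp at h
  nlinarith

/-! ### The parabolic maximum principle -/

/-- Maximum principle for subsolutions of `∂ₜd + a ∂₁d + b ∂₂d ≤ Δd + λd` whose spatial values
are all attained on a compact set `K`. The function `e^{-λt} d − εt` cannot attain its maximum
over `[0,t₁] × K` at a positive time; letting `ε → 0` gives the bound. -/
lemma max_principle {a b d : ℝ × (ℝ × ℝ) → ℝ} (hd : ContDiff ℝ ∞ d) (lam T M : ℝ)
    (K : Set (ℝ × ℝ)) (hK : IsCompact K)
    (hper : ∀ t x, ∃ y ∈ K, d (t, x) = d (t, y))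
    (hsub : ∀ t ∈ Set.Icc 0 T, ∀ x,
      dirD eT d (t, x) + (a (t, x) * dirD eX d (t, x) + b (t, x) * dirD eY d (t, x))
        ≤ (dirD eX (dirD eX d) (t, x) + dirD eY (dirD eY d) (t, x)) + lam * d (t, x))
    (h0 : ∀ x ∈ K, d (0, x) ≤ M) (t : ℝ) (ht : t ∈ Set.Icc 0 T) (x : ℝ × ℝ) (hx : x ∈ K) :
    d (t, x) ≤ Real.exp (lam * t) * M := by
  have main : ∀ ε > 0, Real.exp (-lam * t) * d (t, x) - ε * t ≤ M := by
    intro ε hε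
    set w : ℝ × (ℝ × ℝ) → ℝ := fun p => Real.exp (-lam * p.1) * d p - ε * p.1 with hw
    have hwc : Continuous w := by
      have := hd.continuous
      fun_prop
    obtain ⟨⟨s, y⟩, ⟨hs, hy⟩, hmax⟩ := (isCompact_Icc.prod hK).exists_isMaxOn
      ⟨(t, x), ⟨⟨ht.1, le_refl t⟩, hx⟩⟩ hwc.continuousOn
    have hmax' : ∀ r ∈ Set.Icc 0 t, ∀ z ∈ K, w (r, z) ≤ w (s, y) :=
      fun r hr z hz => hmax (Set.mk_mem_prod hr hz)
    have hle : w (t, x) ≤ w (s, y) := hmax' t ⟨ht.1, le_rfl⟩ x hx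
    simp only at hs hy
    rcases hs.1.eq_or_lt with hs0 | hs0
    · have : w (s, y) ≤ M := by
        have := h0 y hy
        simpa [hw, ← hs0] using this
      exact hle.trans this
    · exfalso
      have hE : 0 < Real.exp (-lam * s) := Real.exp_pos _
      have hsp : ∀ z, d (s, z) ≤ d (s, y) := by
        intro z
        obtain ⟨z', hz', e⟩ := hper s z
        have := hmax' s hs z' hz'
        simp only [hw] at this
        rw [e]
        exact le_of_mul_le_mul_left (by linarith) hE
      have hsl : ∀ v : ℝ × (ℝ × ℝ), v.1 = 0 → ∀ r : ℝ, d ((s, y) + r • v) ≤ d (s, y) := by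
        intro v hv r
        have : ((s, y) + r • v : ℝ × (ℝ × ℝ)) = (s, y + r • v.2) := by
          ext <;> simp [hv]
        rw [this]
        exact hsp _
      obtain ⟨hX, hXX⟩ := max_conditions hd (s, y) eX (hsl eX rfl)
      obtain ⟨hY, hYY⟩ := max_conditions hd (s, y) eY (hsl eY rfl)
      have hder : HasDerivAt (fun r => w (r, y))
          (Real.exp (-lam * s) * (-lam) * d (s, y)
            + Real.exp (-lam * s) * dirD eT d (s, y) - ε) s := by
        have e1 : HasDerivAt (fun r : ℝ => Real.exp (-lam * r))
            (Real.exp (-lam * s) * (-lam)) s := by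
          simpa using ((hasDerivAt_id s).const_mul (-lam)).exp
        have e2 : HasDerivAt (fun r : ℝ => ε * r) ε s := by
          simpa using (hasDerivAt_id s).const_mul ε
        exact (e1.mul (hasDerivAt_time hd s y)).sub e2
      have hnn := time_deriv_nonneg hs0 hder
        (fun r hr => hmax' r ⟨hr.1, hr.2.trans hs.2⟩ y hy)
      have hq := hsub s ⟨hs.1, hs.2.trans ht.2⟩ y
      rw [hX, hY] at hq
      have : Real.exp (-lam * s) * (dirD eT d (s, y) - lam * d (s, y)) ≤ 0 :=
        mul_nonpos_of_nonneg_of_nonpos hE.le (by linarith)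
      nlinarith
  have hfin : Real.exp (-lam * t) * d (t, x) ≤ M := by
    refine le_of_forall_pos_le_add fun η hη => ?_
    have hpos : 0 < t + 1 := by linarith [ht.1]
    have h := main (η / (t + 1)) (div_pos hη hpos)
    have : η / (t + 1) * t ≤ η := by
      rw [div_mul_eq_mul_div, div_le_iff₀ hpos]
      nlinarith
    linarith
  have hmul := mul_le_mul_of_nonneg_left hfin (Real.exp_pos (lam * t)).le
  rwa [← mul_assoc, ← Real.exp_add, show lam * t + -lam * t = 0 by ring, Real.exp_zero,
    one_mul] at hmul

/-! ### Periodicity -/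

lemma divg_periodic {v : ℝ × ℝ → ℝ × ℝ} (hv : Periodic2 v) (x : ℝ × ℝ) :
    divg v (x.1 + 2 * π, x.2) = divg v x ∧ divg v (x.1, x.2 + 2 * π) = divg v x := by
  have hp1 : ∀ s r, v (s + 2 * π, r) = v (s, r) := fun s r => (hv (s, r)).1
  have hp2 : ∀ s r, v (s, r + 2 * π) = v (s, r) := fun s r => (hv (s, r)).2
  unfold divg pd1 pd2
  constructor
  · have h := deriv_comp_add_const (fun s => (v (s, x.2)).1) (2 * π) x.1
    simp only [hp1] at h ⊢
    rw [← h]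
  · have h := deriv_comp_add_const (fun s => (v (x.1, s)).2) (2 * π) x.2
    simp only [hp2] at h ⊢
    rw [← h]

lemma divg_exists_mem {v : ℝ × ℝ → ℝ × ℝ} (hv : Periodic2 v) (x : ℝ × ℝ) :
    ∃ y ∈ Omega2, divg v x = divg v y := by
  have h1 : Function.Periodic (fun s => divg v (s, x.2)) (2 * π) :=
    fun s => (divg_periodic hv (s, x.2)).1
  obtain ⟨y1, hy1, e1⟩ := h1.exists_mem_Ico₀ Real.two_pi_pos x.1
  have h2 : Function.Periodic (fun s => divg v (y1, s)) (2 * π) :=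
    fun s => (divg_periodic hv (y1, s)).2
  obtain ⟨y2, hy2, e2⟩ := h2.exists_mem_Ico₀ Real.two_pi_pos x.2
  exact ⟨(y1, y2), ⟨⟨hy1.1, hy1.2.le⟩, ⟨hy2.1, hy2.2.le⟩⟩, e1.trans e2⟩

/-- Maximum principle for the divergence of smooth periodic curl-free
solutions of the 2D Burgers–Sivashinsky equation: `δ*(t) ≤ e^{λt} δ*(0)`; in particular
`sup_Ω max(δ(t,·),0) ≤ e^{λt} max(δ*(0),0)`. -/
theorem stmt17 (lam T : ℝ) (hlam : 0 < lam) (hT : 0 ≤ T)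
    (u : ℝ → ℝ × ℝ → ℝ × ℝ) (hreg : SmoothTS u) (hper : ∀ t, Periodic2 (u t))
    (hBSE : IsBSE lam T u)
    (hcf : ∀ t ∈ Set.Icc (0:ℝ) T, ∀ x : ℝ × ℝ,
      pd1 (fun y => (u t y).2) x = pd2 (fun y => (u t y).1) x) :
    (∀ t ∈ Set.Icc (0:ℝ) T,
        sSup (divg (u t) '' Omega2) ≤ Real.exp (lam * t) * sSup (divg (u 0) '' Omega2)) ∧
    (∀ t ∈ Set.Icc (0:ℝ) T,
        sSup ((fun x => max (divg (u t) x) 0) '' Omega2)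
          ≤ Real.exp (lam * t) * max (sSup (divg (u 0) '' Omega2)) 0) := by
  have hu : ContDiff ℝ ∞ (fun p : ℝ × (ℝ × ℝ) => u p.1 p.2) := contDiff_infty.2 hreg
  set a : ℝ × (ℝ × ℝ) → ℝ := fun p => (u p.1 p.2).1 with ha_def
  set b : ℝ × (ℝ × ℝ) → ℝ := fun p => (u p.1 p.2).2 with hb_def
  have ha : ContDiff ℝ ∞ a := hu.fst
  have hb : ContDiff ℝ ∞ b := hu.snd
  set d : ℝ × (ℝ × ℝ) → ℝ := fun p => dirD eX a p + dirD eY b p with hd_def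
  have hd : ContDiff ℝ ∞ d := (dirD_smooth ha eX).add (dirD_smooth hb eY)
  have a1 : ∀ t, pd1 (fun y => (u t y).1) = fun y => dirD eX a (t, y) := pd1_slice ha
  have a2 : ∀ t, pd2 (fun y => (u t y).1) = fun y => dirD eY a (t, y) := pd2_slice ha
  have b1 : ∀ t, pd1 (fun y => (u t y).2) = fun y => dirD eX b (t, y) := pd1_slice hb
  have b2 : ∀ t, pd2 (fun y => (u t y).2) = fun y => dirD eY b (t, y) := pd2_slice hb
  have hdiv : ∀ t x, divg (u t) x = d (t, x) := by
    intro t x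
    unfold divg
    rw [a1, b2]
  have hsub : ∀ t ∈ Set.Icc 0 T, ∀ x,
      dirD eT d (t, x) + (a (t, x) * dirD eX d (t, x) + b (t, x) * dirD eY d (t, x))
        ≤ (dirD eX (dirD eX d) (t, x) + dirD eY (dirD eY d) (t, x)) + lam * d (t, x) := by
    intro t ht x
    have heq := div_equation ha hb lam t
      (fun x => by
        have h := (hBSE t ht x).1
        unfold adv lap at h
        rw [a1, a2, pd1_slice (dirD_smooth ha eX), pd2_slice (dirD_smooth ha eY),
          (hasDerivAt_time ha t x).deriv] at h
        exact h)
      (fun x => by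
        have h := (hBSE t ht x).2
        unfold adv lap at h
        rw [b1, b2, pd1_slice (dirD_smooth hb eX), pd2_slice (dirD_smooth hb eY),
          (hasDerivAt_time hb t x).deriv] at h
        exact h)
      (fun x => by
        have h := hcf t ht x
        rwa [b1, a2] at h)
      hd_def x
    rw [heq]
    nlinarith [sq_nonneg (dirD eX a (t, x)), sq_nonneg (dirD eY a (t, x)),
      sq_nonneg (dirD eX b (t, x)), sq_nonneg (dirD eY b (t, x))]
  have hK : IsCompact Omega2 := isCompact_Icc.prod isCompact_Icc
  have hne : Omega2.Nonempty :=
    ⟨(0, 0), ⟨⟨le_rfl, Real.two_pi_pos.le⟩, ⟨le_rfl, Real.two_pi_pos.le⟩⟩⟩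
  have hbdd : BddAbove (divg (u 0) '' Omega2) := by
    refine (hK.image ?_).bddAbove
    have : divg (u 0) = fun x => d (0, x) := funext (hdiv 0)
    rw [this]
    have := hd.continuous
    fun_prop
  have hmain : ∀ t ∈ Set.Icc (0:ℝ) T, ∀ x ∈ Omega2,
      divg (u t) x ≤ Real.exp (lam * t) * sSup (divg (u 0) '' Omega2) := by
    intro t ht x hx
    rw [hdiv]
    refine max_principle hd lam T _ Omega2 hK ?_ hsub ?_ t ht x hx
    · intro t x
      obtain ⟨y, hy, e⟩ := divg_exists_mem (hper t) x
      exact ⟨y, hy, by rw [← hdiv, ← hdiv, e]⟩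
    · intro x hx
      rw [← hdiv]
      exact le_csSup hbdd (Set.mem_image_of_mem _ hx)
  refine ⟨fun t ht => csSup_le (hne.image _) ?_, fun t ht => csSup_le (hne.image _) ?_⟩
  · rintro _ ⟨x, hx, rfl⟩
    exact hmain t ht x hx
  · rintro _ ⟨x, hx, rfl⟩
    have hE := (Real.exp_pos (lam * t)).le
    exact max_le
      ((hmain t ht x hx).trans (mul_le_mul_of_nonneg_left (le_max_left _ _) hE))
      (mul_nonneg hE (le_max_right _ _))
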